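/- Let G be a graph with vertices x_1,…,x_n and edge ideal I(G) ⊆ R. Then for all k ≥ 1 and all i: (a) depth(R/(I(G)^k : x_i^k)) ≤ depth(R/(I(G \ N_G(x_i))^k + (N_G(x_i)))); and (c) dim(R) − ℓ(I(G)) = |isol(G)| + c_0(G), where ℓ(I(G)) is the analytic spread of I(G). -/

import Mathlib

/-!
Depth inequality. Let `J = I(G)^k : x_i^k`, `J' = I(G \ N(x_i))^k + (N(x_i))`, and let `φ` be the
`K`-algebra endomorphism of `R` setting the neighbours of `x_i` to zero. It is idempotent, and
`φ(r) - r ∈ (N(x_i))`. If `x_j` is a neighbour of `x_i` then `x_j^k ∈ J`, so `(N(x_i))` lies in the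
radical of `J`. Since `x_i` is isolated in `G \ N(x_i)`, multiplication by `x_i^k` is injective
modulo `I(G \ N(x_i))^k`, and hence `φ(J') ⊆ J ⊆ J'`. Thus `φ` makes `R/J'` a retract of `R/J`,
though not an `R`-linear one. If `x₀ ∈ m` is regular on `R/J`, then so is `x = φ(x₀)`, which
differs from it by a nilpotent; and because `φ(x) = x`, it is regular on `R/J'` too. The retraction
survives passing from `R/J, R/J'` to their quotients by `x`, so the long exact sequence of `Ext` and
induction transfer the vanishing of `Ext^i(R/m, -)` below a given degree from `R/J` to `R/J'`
(`subsingleton_ext_of_semilinear_retract`).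

Analytic spread. The generators `x_a x_b t` of the Rees algebra generate a `K`-algebra `A` in `R[t]`
that maps isomorphically onto the fiber ring: in `A` the coefficient of `t^j` is homogeneous of
degree `2j`, whereas in `m R[It]` it lies in `m^(2j+1)`. Setting `t = 1` identifies `A` with the
algebra generated by the monomials `x_a x_b`, whose dimension is its transcendence degree, that is,
the rank of the exponent vectors `e_a + e_b` (`ringKrullDim_adjoin_image_monomial`). The orthogonal
complement of these vectors consists of the functions that change sign along every edge. Such
functions vanish on non-bipartite components, and on a bipartite component they are determined by
one value, so `n - ℓ(I(G))` is the number of bipartite components, an isolated vertex being one.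
-/

open MvPolynomial CategoryTheory Opposite

noncomputable section

/-- The polynomial ring `K[x_v : v ∈ σ]` over the field `K`. -/
abbrev MvPoly (K : Type) [Field K] (σ : Type) : Type := MvPolynomial σ K

variable (K : Type) [Field K] (σ : Type)

/-- The graded maximal ideal `m = (x_v : v ∈ σ)` generated by all the variables. -/
def maxIdeal : Ideal (MvPoly K σ) := Ideal.span (Set.range MvPolynomial.X)

/-- The depth of `R/I` with respect to the graded maximal ideal, defined as
`inf { i | Ext^i(R/m, R/I) ≠ 0 }` (with value `⊤` for the zero module). -/
def depthQ (I : Ideal (MvPoly K σ)) : ℕ∞ :=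
  sInf { d : ℕ∞ | ∃ i : ℕ, d = i ∧
    Nontrivial (((Ext (MvPoly K σ) (ModuleCat (MvPoly K σ)) i).obj
      (op (ModuleCat.of (MvPoly K σ) (MvPoly K σ ⧸ maxIdeal K σ)))).obj
      (ModuleCat.of (MvPoly K σ) (MvPoly K σ ⧸ I))) }

variable {n : ℕ}

/-- The monomial `x^a`. -/
def mono (K : Type) [Field K] {n : ℕ} (a : Fin n →₀ ℕ) : MvPoly K (Fin n) :=
  MvPolynomial.monomial a 1

/-- A monomial ideal: an ideal generated by monomials. -/
def IsMonomialIdeal (I : Ideal (MvPoly K (Fin n))) : Prop :=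
  ∃ S : Set (Fin n →₀ ℕ), I = Ideal.span (mono K '' S)

/-- A squarefree exponent vector. -/
def SqfreeExp (a : Fin n →₀ ℕ) : Prop := ∀ i, a i ≤ 1

/-- A squarefree monomial ideal: an ideal generated by squarefree monomials. -/
def IsSqfreeMonomialIdeal (I : Ideal (MvPoly K (Fin n))) : Prop :=
  ∃ S : Set (Fin n →₀ ℕ), (∀ a ∈ S, SqfreeExp a) ∧ I = Ideal.span (mono K '' S)

/-- The edge ideal of a graph, generated by the monomials `x_i x_j` for edges `{x_i, x_j}`. -/
def edgeIdealG (K : Type) [Field K] {n : ℕ} (G : SimpleGraph (Fin n)) :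
    Ideal (MvPoly K (Fin n)) :=
  Ideal.span { p | ∃ a b, G.Adj a b ∧ p = MvPolynomial.X a * MvPolynomial.X b }

/-- The edge ideal of the induced subgraph of `G` obtained by deleting the vertices in `s`. -/
def edgeIdealDel (K : Type) [Field K] {n : ℕ} (G : SimpleGraph (Fin n)) (s : Set (Fin n)) :
    Ideal (MvPoly K (Fin n)) :=
  Ideal.span { p | ∃ a b, G.Adj a b ∧ a ∉ s ∧ b ∉ s ∧
    p = MvPolynomial.X a * MvPolynomial.X b }

/-- The ideal generated by the variables corresponding to the neighbours of `x_i`. -/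
def nbIdeal (K : Type) [Field K] {n : ℕ} (G : SimpleGraph (Fin n)) (i : Fin n) :
    Ideal (MvPoly K (Fin n)) :=
  Ideal.span (MvPolynomial.X '' (G.neighborSet i))

/-- The analytic spread of an ideal: `ℓ(I) = dim (R[It] / m R[It])`, where `R[It]` is the
Rees algebra of `I` and `m` is the graded maximal ideal. -/
def analyticSpread (K : Type) [Field K] {n : ℕ} (I : Ideal (MvPoly K (Fin n))) :
    WithBot ℕ∞ :=
  ringKrullDim ((reesAlgebra I) ⧸ (Ideal.span
    ((algebraMap (MvPoly K (Fin n)) (reesAlgebra I)) '' (maxIdeal K (Fin n) : Set _))))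

end

section ExtComparison

universe u v w

variable {C : Type u} [Category.{v} C] [Abelian C]

theorem subsingleton_hom_iff_of_exact {S : ShortComplex C} (hS : S.Exact) [Epi S.g] (Y : C) :
    Subsingleton (S.X₃ ⟶ Y) ↔ ∀ f : S.X₂ ⟶ Y, S.f ≫ f = 0 → f = 0 := by
  constructor
  · intro _ f hf
    rw [← hS.g_desc f hf, Subsingleton.elim (hS.desc f hf) 0, Limits.comp_zero]
  · refine fun h => subsingleton_of_forall_eq 0 fun f => ?_
    rw [← cancel_epi S.g, Limits.comp_zero]
    exact h (S.g ≫ f) (by rw [S.zero_assoc, Limits.zero_comp])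

theorem subsingleton_abelianExt_iff_forall_cocycle [HasExt.{w} C] {X : C}
    (P : ProjectiveResolution X) (Y : C) (i : ℕ) :
    Subsingleton (Abelian.Ext X Y i) ↔ ∀ f : P.complex.X i ⟶ Y, P.complex.d (i + 1) i ≫ f = 0 →
      ∃ g : P.complex.X (i - 1) ⟶ Y, P.complex.d i (i - 1) ≫ g = f := by
  cases i with
  | zero =>
    have d_zero : P.complex.d 0 0 = 0 := P.complex.shape 0 0 (by simp)
    rw [Abelian.Ext.addEquiv₀.subsingleton_congr]
    refine (subsingleton_hom_iff_of_exact P.exact₀ Y).trans (forall₂_congr fun f _ => ?_)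
    simp only [d_zero, Limits.zero_comp]
    exact ⟨fun h => ⟨0, h.symm⟩, fun ⟨_, h⟩ => h.symm⟩
  | succ i =>
    constructor
    · intro h f hf
      exact (P.extMk_eq_zero_iff f (i + 2) rfl hf i rfl).mp (Subsingleton.elim _ _)
    · refine fun h => subsingleton_of_forall_eq 0 fun α => ?_
      obtain ⟨f, hf, rfl⟩ := P.extMk_surjective α (i + 2) rfl
      exact (P.extMk_eq_zero_iff f (i + 2) rfl hf i rfl).mpr (h f hf)

theorem subsingleton_ext_iff_forall_cocycle (R : Type*) [Ring R] [Linear R C]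
    [EnoughProjectives C] {X : C} (P : ProjectiveResolution X) (Y : C) (i : ℕ) :
    Subsingleton (((Ext R C i).obj (op X)).obj Y) ↔
      ∀ f : P.complex.X i ⟶ Y, P.complex.d (i + 1) i ≫ f = 0 →
        ∃ g : P.complex.X (i - 1) ⟶ Y, P.complex.d i (i - 1) ≫ g = f := by
  rw [← ModuleCat.isZero_iff_subsingleton, (P.isoExt i Y).isZero_iff,
    ← HomologicalComplex.exactAt_iff_isZero_homology,
    HomologicalComplex.exactAt_iff' _ (i - 1) i (i + 1) (by cases i <;> simp) (by simp),
    ShortComplex.moduleCat_exact_iff]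
  rfl

theorem subsingleton_ext_iff_subsingleton_abelianExt (R : Type*) [Ring R] [Linear R C]
    [EnoughProjectives C] [HasExt.{w} C] (X Y : C) (i : ℕ) :
    Subsingleton (((Ext R C i).obj (op X)).obj Y) ↔ Subsingleton (Abelian.Ext X Y i) := by
  rw [subsingleton_ext_iff_forall_cocycle R (projectiveResolution X),
    subsingleton_abelianExt_iff_forall_cocycle (projectiveResolution X)]

end ExtComparison

section ExtRetract

universe u v

open Pointwise ModuleCat

variable {R : Type u} [CommRing R]

theorem isSMulRegular_of_sub_mem_radical_annihilator {M : Type*} [AddCommGroup M] [Module R M]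
    {a b : R} (ha : IsSMulRegular M a) (hab : a - b ∈ (Module.annihilator R M).radical) :
    IsSMulRegular M b := by
  obtain ⟨k, hk⟩ := hab
  refine (isSMulRegular_iff_right_eq_zero_of_smul (r := b)).mpr fun m hm => ?_
  have sub_pow_smul (j : ℕ) : (a - b) ^ j • m = a ^ j • m := by
    induction j with
    | zero => rw [pow_zero, pow_zero]
    | succ j ih =>
      rw [pow_succ, mul_smul, sub_smul, hm, sub_zero, smul_comm, ih, ← mul_smul, ← pow_succ']
  refine isSMulRegular_iff_right_eq_zero_of_smul.mp (ha.pow k) m ?_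
  rw [← sub_pow_smul, Module.mem_annihilator.mp hk m]

theorem isSMulRegular_of_semilinear_injective {M M' : Type*} [AddCommGroup M] [Module R M]
    [AddCommGroup M'] [Module R M'] {φ : R →+* R} {s : M' →ₛₗ[φ] M} (hs : Function.Injective s)
    {x : R} (hx : IsSMulRegular M (φ x)) : IsSMulRegular M' x := fun m m' h =>
  hs (hx (by simpa only [map_smulₛₗ] using congrArg s h))

variable [Small.{v} R]

theorem subsingleton_ext_quotSMulTop {N M : ModuleCat.{v} R} {x : R} (hx : IsSMulRegular M x)
    {i : ℕ} (h : Subsingleton (Abelian.Ext N M i))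
    (h' : Subsingleton (Abelian.Ext N M (i + 1))) :
    Subsingleton (Abelian.Ext N (ModuleCat.of R (QuotSMulTop x M)) i) :=
  AddCommGrpCat.subsingleton_of_isZero <| ShortComplex.Exact.isZero_of_both_zeros
    (Abelian.Ext.covariant_sequence_exact₃' N hx.smulShortComplex_shortExact i (i + 1) rfl)
    ((AddCommGrpCat.isZero_of_iff_subsingleton.mpr h).eq_zero_of_src _)
    ((AddCommGrpCat.isZero_of_iff_subsingleton.mpr h').eq_zero_of_tgt _)

theorem subsingleton_ext_succ_of_quotSMulTop {N M : ModuleCat.{v} R} {x : R}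
    (hxN : x ∈ Module.annihilator R N) (hxM : IsSMulRegular M x) {i : ℕ}
    (h : Subsingleton (Abelian.Ext N (ModuleCat.of R (QuotSMulTop x M)) i)) :
    Subsingleton (Abelian.Ext N M (i + 1)) := by
  let smul_x := AddCommGrpCat.ofHom
    ((Abelian.Ext.mk₀ (M.smulShortComplex x).f).postcomp N (add_zero (i + 1)))
  have smul_x_mono : Mono smul_x :=
    (Abelian.Ext.covariant_sequence_exact₁' N hxM.smulShortComplex_shortExact i (i + 1) rfl).mono_g
      ((AddCommGrpCat.isZero_of_iff_subsingleton.mpr h).eq_zero_of_src _)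
  have smul_x_eq_zero : smul_x = 0 :=
    Abelian.Ext.postcomp_smul_id_eq_zero_of_mem_annihilator hxN (i + 1)
  exact AddCommGrpCat.subsingleton_of_isZero (Limits.IsZero.of_mono_eq_zero _ smul_x_eq_zero)

theorem subsingleton_ext_zero_iff [IsNoetherianRing R] {N M : ModuleCat.{v} R}
    [Module.Finite R N] [Module.Finite R M] :
    Subsingleton (Abelian.Ext N M 0) ↔ ∃ x ∈ Module.annihilator R N, IsSMulRegular M x :=
  (Abelian.Ext.addEquiv₀.trans homAddEquiv).subsingleton_congr.trans
    IsSMulRegular.subsingleton_linearMap_iff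

theorem subsingleton_ext_of_semilinear_retract [IsNoetherianRing R] {N : ModuleCat.{v} R}
    [Module.Finite R N] {φ : R →+* R} (hφ : ∀ r, φ (φ r) = φ r)
    (hφN : Module.annihilator R N ≤ (Module.annihilator R N).comap φ) (t : ℕ)
    {M M' : ModuleCat.{v} R} [Module.Finite R M] [Module.Finite R M']
    (hφM : ∀ r, r - φ r ∈ (Module.annihilator R M).radical)
    (p : M →ₗ[R] M') (s : M' →ₛₗ[φ] M) (hps : Function.LeftInverse p s)
    (h : ∀ i < t, Subsingleton (Abelian.Ext N M i)) :
    ∀ i < t, Subsingleton (Abelian.Ext N M' i) := by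
  induction t generalizing M M' with
  | zero => exact fun i hi => absurd hi i.not_lt_zero
  | succ t ih =>
    obtain ⟨x₀, hx₀, reg₀⟩ := subsingleton_ext_zero_iff.mp (h 0 t.succ_pos)
    obtain ⟨x, hx, fix, reg⟩ : ∃ x ∈ Module.annihilator R N, φ x = x ∧ IsSMulRegular M x :=
      ⟨φ x₀, hφN hx₀, hφ x₀, isSMulRegular_of_sub_mem_radical_annihilator reg₀ (hφM x₀)⟩
    have reg' : IsSMulRegular M' x :=
      isSMulRegular_of_semilinear_injective hps.injective (fix.symm ▸ reg)
    let sq : QuotSMulTop x M' →ₛₗ[φ] QuotSMulTop x M := Submodule.mapQ _ _ s <| by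
      rintro _ ⟨m, -, rfl⟩
      refine ⟨s m, trivial, ?_⟩
      change x • s m = s (x • m)
      rw [map_smulₛₗ, fix]
    have ext_quot := ih (M := .of R (QuotSMulTop x M)) (M' := .of R (QuotSMulTop x M'))
      (fun r => Ideal.radical_mono (LinearMap.annihilator_le_of_surjective _
        (Submodule.mkQ_surjective _)) (hφM r))
      (QuotSMulTop.map x p) sq
      (by rintro ⟨m⟩; exact congrArg (Submodule.Quotient.mk) (hps m))
      (fun i hi => subsingleton_ext_quotSMulTop reg (h i (by omega)) (h (i + 1) (by omega)))
    rintro (_ | i) hi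
    · exact subsingleton_ext_zero_iff.mpr ⟨x, hx, reg'⟩
    · exact subsingleton_ext_succ_of_quotSMulTop hx reg' (ext_quot i (by omega))

end ExtRetract

section Depth

theorem natCast_le_depthQ_iff (K : Type) [Field K] (σ : Type) (I : Ideal (MvPoly K σ)) (t : ℕ) :
    (t : ℕ∞) ≤ depthQ K σ I ↔
      ∀ i < t, Subsingleton (Abelian.Ext (ModuleCat.of (MvPoly K σ) (MvPoly K σ ⧸ maxIdeal K σ))
        (ModuleCat.of (MvPoly K σ) (MvPoly K σ ⧸ I)) i) := by
  simp only [← subsingleton_ext_iff_subsingleton_abelianExt (MvPoly K σ),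
    ← not_nontrivial_iff_subsingleton]
  constructor
  · intro ht i hi hnt
    exact hi.not_ge (by exact_mod_cast ht.trans (sInf_le ⟨i, rfl, hnt⟩))
  · rintro h
    refine le_sInf ?_
    rintro _ ⟨i, rfl, hnt⟩
    exact_mod_cast not_lt.mp fun hi => h i hi hnt

theorem depthQ_le_of_retract (K : Type) [Field K] {σ : Type} [Finite σ]
    {φ : MvPoly K σ →+* MvPoly K σ} (hφ : ∀ r, φ (φ r) = φ r)
    (hφm : maxIdeal K σ ≤ (maxIdeal K σ).comap φ) {J J' : Ideal (MvPoly K σ)} (hJ : J ≤ J')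
    (hφJ : J' ≤ J.comap φ) (hrad : ∀ r, r - φ r ∈ J.radical) (hφJ' : ∀ r, φ r - r ∈ J') :
    depthQ K σ J ≤ depthQ K σ J' := by
  refine ENat.forall_natCast_le_iff_le.mp fun t ht => ?_
  rw [natCast_le_depthQ_iff] at ht ⊢
  let s : (MvPoly K σ ⧸ J') →ₛₗ[φ] (MvPoly K σ ⧸ J) :=
    Submodule.mapQ J' J φ.toSemilinearMap hφJ
  refine subsingleton_ext_of_semilinear_retract hφ ?_ t ?_ (Submodule.factor hJ) s ?_ ht
  · simpa only [Ideal.annihilator_quotient] using hφm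
  · simpa only [Ideal.annihilator_quotient] using hrad
  · rintro ⟨r⟩
    exact (Submodule.Quotient.eq J').mpr (hφJ' r)

end Depth

section KillVars

variable {σ R : Type*} [CommRing R] (s : Set σ)

/-- The endomorphism of the polynomial ring setting the variables in `s` to zero and fixing
the others; for `s = N(x_i)` it splits the passage from `R` to `R / (N(x_i))`. -/
noncomputable def killVars : MvPolynomial σ R →ₐ[R] MvPolynomial σ R :=
  aeval (sᶜ.indicator X)

variable {s}

theorem killVars_X_of_mem {i : σ} (hi : i ∈ s) : killVars s (X i : MvPolynomial σ R) = 0 := by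
  rw [killVars, aeval_X, Set.indicator_of_notMem (Set.notMem_compl_iff.mpr hi)]

theorem killVars_X_of_notMem {i : σ} (hi : i ∉ s) :
    killVars s (X i : MvPolynomial σ R) = X i := by
  rw [killVars, aeval_X, Set.indicator_of_mem (Set.mem_compl hi)]

theorem killVars_of_mem_span {p : MvPolynomial σ R} (hp : p ∈ Ideal.span (X '' s)) :
    killVars s p = 0 := by
  have span_le_ker : Ideal.span (X '' s) ≤ RingHom.ker (killVars s : _ →ₐ[R] _) := by
    rw [Ideal.span_le]
    rintro _ ⟨i, hi, rfl⟩
    exact killVars_X_of_mem hi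
  exact span_le_ker hp

theorem killVars_sub_mem_span (p : MvPolynomial σ R) :
    killVars s p - p ∈ Ideal.span (X '' s) := by
  have mk_comp_killVars : (Ideal.Quotient.mkₐ R (Ideal.span (X '' s))).comp (killVars s) =
      Ideal.Quotient.mkₐ R (Ideal.span (X '' s)) := by
    ext i
    by_cases hi : i ∈ s
    · simp [killVars_X_of_mem hi,
        Ideal.Quotient.eq_zero_iff_mem.mpr (Ideal.subset_span (Set.mem_image_of_mem X hi))]
    · simp [killVars_X_of_notMem hi]
  exact Ideal.Quotient.eq.mp (DFunLike.congr_fun mk_comp_killVars p)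

theorem killVars_killVars (p : MvPolynomial σ R) : killVars s (killVars s p) = killVars s p := by
  rw [← sub_eq_zero, ← map_sub, killVars_of_mem_span (killVars_sub_mem_span p)]

end KillVars

section MonomialIdeal

open Pointwise

variable {σ R : Type*} [CommSemiring R]

theorem span_monomial_pow (S : Set (σ →₀ ℕ)) (k : ℕ) :
    Ideal.span ((fun u => monomial u (1 : R)) '' S) ^ k =
      Ideal.span ((fun u => monomial u (1 : R)) '' (k • S)) := by
  induction k with
  | zero => simp [Ideal.one_eq_top]
  | succ k ih =>
    have monomial_add (u v : σ →₀ ℕ) :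
        monomial (u + v) (1 : R) = monomial u 1 * monomial v 1 := by rw [monomial_mul, one_mul]
    rw [pow_succ, ih, Ideal.span_mul_span', succ_nsmul, ← Set.image2_add, ← Set.image2_mul]
    exact congrArg Ideal.span
      (Set.image_image2_distrib (g := fun u => monomial u (1 : R)) monomial_add).symm

theorem mem_span_monomial_of_X_pow_mul_mem {S : Set (σ →₀ ℕ)} {i : σ} (hS : ∀ u ∈ S, u i = 0)
    {m : ℕ} {p : MvPolynomial σ R}
    (hp : X i ^ m * p ∈ Ideal.span ((fun u => monomial u (1 : R)) '' S)) :
    p ∈ Ideal.span ((fun u => monomial u (1 : R)) '' S) := by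
  rw [mem_ideal_span_monomial_image] at hp ⊢
  intro v hv
  obtain ⟨u, hu, hle⟩ := hp (Finsupp.single i m + v) <| by
    rwa [mem_support_iff, X_pow_eq_monomial, coeff_monomial_mul, one_mul, ← mem_support_iff]
  refine ⟨u, hu, fun j => ?_⟩
  by_cases hj : j = i
  · rw [hj, hS u hu]
    exact Nat.zero_le _
  · simpa [Finsupp.single_eq_of_ne hj] using hle j

end MonomialIdeal

section EdgeIdeal

/-- The vectors `e_a + e_b` for the edges `{a, b}` of `G`: for `A = ℕ` the exponent vectors of the
generators of the edge ideal, for other `A` the columns of the incidence matrix of `G`. -/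
def edgeVectors (A : Type*) [AddMonoidWithOne A] {V : Type*} (G : SimpleGraph V) : Set (V →₀ A) :=
  {u | ∃ a b, G.Adj a b ∧ u = Finsupp.single a 1 + Finsupp.single b 1}

variable (K : Type) [Field K] {n : ℕ} (G : SimpleGraph (Fin n))

theorem image_monomial_edgeVectors :
    (fun u => monomial u (1 : K)) '' edgeVectors ℕ G = {p | ∃ a b, G.Adj a b ∧ p = X a * X b} := by
  ext p
  constructor
  · rintro ⟨_, ⟨a, b, hab, rfl⟩, rfl⟩
    exact ⟨a, b, hab, by simp only [X, monomial_mul, one_mul]⟩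
  · rintro ⟨a, b, hab, rfl⟩
    exact ⟨_, ⟨a, b, hab, rfl⟩, by simp only [X, monomial_mul, one_mul]⟩

theorem edgeIdealG_eq_span_monomial :
    edgeIdealG K G = Ideal.span ((fun u => monomial u (1 : K)) '' edgeVectors ℕ G) :=
  congrArg Ideal.span (image_monomial_edgeVectors K G).symm

variable {K G}

theorem X_mul_X_mem_edgeIdealG {a b : Fin n} (hab : G.Adj a b) : X a * X b ∈ edgeIdealG K G :=
  Ideal.subset_span ⟨a, b, hab, rfl⟩

theorem edgeIdealDel_eq_edgeIdealG (s : Set (Fin n)) :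
    edgeIdealDel K G s = edgeIdealG K (G.induce sᶜ).spanningCoe := by
  simp [edgeIdealDel, edgeIdealG, and_assoc]

open Pointwise in
theorem mem_edgeIdealG_pow_of_X_pow_mul_mem {i : Fin n} (hi : G.IsIsolated i) {k m : ℕ}
    {p : MvPoly K (Fin n)} (hp : X i ^ m * p ∈ edgeIdealG K G ^ k) : p ∈ edgeIdealG K G ^ k := by
  have edgeVectors_subset :
      edgeVectors ℕ G ⊆ AddMonoidHom.mker (Finsupp.applyAddHom i : (Fin n →₀ ℕ) →+ ℕ) := by
    rintro _ ⟨a, b, hab, rfl⟩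
    have hai : a ≠ i := fun h => hi b (h ▸ hab)
    have hbi : b ≠ i := fun h => hi a (h ▸ hab.symm)
    simp [AddMonoidHom.mem_mker, hai, hbi]
  rw [edgeIdealG_eq_span_monomial, span_monomial_pow] at hp ⊢
  exact mem_span_monomial_of_X_pow_mul_mem
    (fun u hu => AddSubmonoid.nsmul_subset edgeVectors_subset hu) hp

theorem killVars_mem_edgeIdealDel_pow {s : Set (Fin n)} {k : ℕ} {p : MvPoly K (Fin n)}
    (hp : p ∈ edgeIdealG K G ^ k) : killVars s p ∈ edgeIdealDel K G s ^ k := by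
  have map_le : (edgeIdealG K G).map (killVars s) ≤ edgeIdealDel K G s := by
    rw [edgeIdealG, Ideal.map_span, Ideal.span_le]
    rintro _ ⟨_, ⟨a, b, hab, rfl⟩, rfl⟩
    rw [map_mul]
    by_cases ha : a ∈ s
    · simp [killVars_X_of_mem ha]
    by_cases hb : b ∈ s
    · simp [killVars_X_of_mem hb]
    rw [killVars_X_of_notMem ha, killVars_X_of_notMem hb]
    exact Ideal.subset_span ⟨a, b, hab, ha, hb, rfl⟩
  have killVars_mem_map := Ideal.mem_map_of_mem (killVars s) hp
  rw [Ideal.map_pow] at killVars_mem_map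
  exact Ideal.pow_right_mono map_le k killVars_mem_map

theorem edgeIdealDel_le (s : Set (Fin n)) : edgeIdealDel K G s ≤ edgeIdealG K G :=
  Ideal.span_mono fun _ ⟨a, b, hab, _, _, hp⟩ => ⟨a, b, hab, hp⟩

theorem colon_le_edgeIdealDel_pow_add_nbIdeal (k m : ℕ) (i : Fin n) :
    (edgeIdealG K G ^ k).colon (Ideal.span {(X i : MvPoly K (Fin n)) ^ m}) ≤
      edgeIdealDel K G (G.neighborSet i) ^ k + nbIdeal K G i := by
  intro p hp
  let φ := killVars (R := K) (G.neighborSet i)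
  have φ_mem : φ p ∈ edgeIdealDel K G (G.neighborSet i) ^ k := by
    have hi : (G.induce (G.neighborSet i)ᶜ).spanningCoe.IsIsolated i := by
      simp +contextual [SimpleGraph.IsIsolated]
    have φ_mul_mem := killVars_mem_edgeIdealDel_pow (s := G.neighborSet i)
      (Ideal.mem_colon_span_singleton.mp hp)
    rw [map_mul, map_pow, killVars_X_of_notMem G.notMem_neighborSet_self, mul_comm] at φ_mul_mem
    rw [edgeIdealDel_eq_edgeIdealG] at φ_mul_mem ⊢
    exact mem_edgeIdealG_pow_of_X_pow_mul_mem hi φ_mul_mem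
  rw [← sub_sub_cancel (φ p) p]
  exact sub_mem (Ideal.mem_sup_left φ_mem) (Ideal.mem_sup_right (killVars_sub_mem_span p))

theorem nbIdeal_le_radical_colon {k m : ℕ} (hkm : k ≤ m) (i : Fin n) :
    nbIdeal K G i ≤
      ((edgeIdealG K G ^ k).colon (Ideal.span {(X i : MvPoly K (Fin n)) ^ m})).radical := by
  rw [nbIdeal, Ideal.span_le]
  rintro _ ⟨j, hj, rfl⟩
  refine ⟨m, Ideal.mem_colon_span_singleton.mpr ?_⟩
  rw [← mul_pow]
  exact Ideal.pow_le_pow_right hkm (Ideal.pow_mem_pow (X_mul_X_mem_edgeIdealG hj.symm) m)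

theorem killVars_mem_colon {k m : ℕ} {i : Fin n} {p : MvPoly K (Fin n)}
    (hp : p ∈ edgeIdealDel K G (G.neighborSet i) ^ k + nbIdeal K G i) :
    killVars (G.neighborSet i) p ∈
      (edgeIdealG K G ^ k).colon (Ideal.span {(X i : MvPoly K (Fin n)) ^ m}) := by
  obtain ⟨a, ha, b, hb, rfl⟩ := Submodule.mem_sup.mp hp
  rw [map_add, killVars_of_mem_span hb, add_zero, Ideal.mem_colon_span_singleton]
  exact Ideal.mul_mem_right _ _ (Ideal.pow_right_mono (edgeIdealDel_le _) k
    (killVars_mem_edgeIdealDel_pow (Ideal.pow_right_mono (edgeIdealDel_le _) k ha)))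

theorem depthQ_colon_le {k m : ℕ} (hkm : k ≤ m) (i : Fin n) :
    depthQ K (Fin n) ((edgeIdealG K G ^ k).colon (Ideal.span {(X i : MvPoly K (Fin n)) ^ m})) ≤
      depthQ K (Fin n) (edgeIdealDel K G (G.neighborSet i) ^ k + nbIdeal K G i) := by
  have sub_mem := killVars_sub_mem_span (s := G.neighborSet i) (R := K)
  refine depthQ_le_of_retract K (φ := (killVars (G.neighborSet i)).toRingHom) killVars_killVars ?_
    (colon_le_edgeIdealDel_pow_add_nbIdeal k m i) (fun p hp => killVars_mem_colon hp)
    (fun p => nbIdeal_le_radical_colon hkm i ?_) (fun p => Ideal.mem_sup_right (sub_mem p))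
  · intro p hp
    have sub_mem_maxIdeal : killVars (G.neighborSet i) p - p ∈ maxIdeal K (Fin n) :=
      Ideal.span_mono (Set.image_subset_range _ _) (sub_mem p)
    exact (Submodule.sub_mem_iff_left _ hp).mp sub_mem_maxIdeal
  · rw [← neg_sub]
    exact neg_mem (sub_mem p)

end EdgeIdeal

section LinearIndependentNat

variable {ι M : Type*} [AddCommGroup M] {v : ι → M}

theorem linearIndependent_nat_iff_int : LinearIndependent ℕ v ↔ LinearIndependent ℤ v := by
  refine ⟨fun h => ?_, fun h => h.restrict_scalars ?_⟩
  · rw [linearIndependent_iff'ₛ] at h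
    rw [linearIndependent_iff']
    intro s g hg i hi
    have sum_toNat_eq : ∑ j ∈ s, (g j).toNat • v j = ∑ j ∈ s, (-g j).toNat • v j := by
      rw [← sub_eq_zero, ← Finset.sum_sub_distrib, ← hg]
      refine Finset.sum_congr rfl fun j _ => ?_
      rw [← natCast_zsmul, ← natCast_zsmul, ← sub_smul, Int.toNat_sub_toNat_neg]
    have toNat_eq := h s (fun j => (g j).toNat) (fun j => (-g j).toNat) sum_toNat_eq i hi
    rw [← Int.toNat_sub_toNat_neg (g i), toNat_eq, sub_self]
  · simpa using Nat.cast_injective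

theorem linearIndependent_nat_iff_rat [Module ℚ M] :
    LinearIndependent ℕ v ↔ LinearIndependent ℚ v :=
  linearIndependent_nat_iff_int.trans (LinearIndependent.iff_fractionRing ℤ ℚ)

end LinearIndependentNat

section MonomialIndependence

/-- The inclusion of the exponent vectors of monomials in the variables `σ` into the rational
vector space with basis `σ`. -/
noncomputable def exponentToRat (σ : Type*) : (σ →₀ ℕ) →+ (σ →₀ ℚ) :=
  Finsupp.mapRange.addMonoidHom (Nat.castAddMonoidHom ℚ)

variable {σ ι R : Type*} [CommRing R]

theorem exponentToRat_injective : Function.Injective (exponentToRat σ) :=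
  Finsupp.mapRange_injective _ Nat.cast_zero Nat.cast_injective

theorem exponentToRat_single (i : σ) (m : ℕ) :
    exponentToRat σ (Finsupp.single i m) = Finsupp.single i (m : ℚ) :=
  Finsupp.mapRange_single (hf := Nat.cast_zero)

theorem aeval_monomial_one_eq_mapDomain (b : ι → σ →₀ ℕ) (p : MvPolynomial ι R) :
    aeval (fun j => monomial (b j) (1 : R)) p =
      AddMonoidAlgebra.mapDomain (Finsupp.linearCombination ℕ b) p := by
  have aeval_eq : aeval (fun j => monomial (b j) (1 : R)) =
      AddMonoidAlgebra.mapDomainAlgHom R R (Finsupp.linearCombination ℕ b).toAddMonoidHom := by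
    ext j : 1
    rw [aeval_X]
    simp [X, monomial, AddMonoidAlgebra.mapDomainAlgHom]
  exact DFunLike.congr_fun aeval_eq p

theorem algebraicIndependent_monomial_iff [Nontrivial R] {b : ι → σ →₀ ℕ} :
    AlgebraicIndependent R (fun j => monomial (b j) (1 : R)) ↔ LinearIndependent ℕ b := by
  constructor
  · intro h u w huw
    refine monomial_left_injective (one_ne_zero (α := R)) (h ?_)
    simp only [aeval_monomial_one_eq_mapDomain]
    simp [monomial, huw]
  · intro h p q hpq
    rw [aeval_monomial_one_eq_mapDomain, aeval_monomial_one_eq_mapDomain] at hpq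
    exact AddMonoidAlgebra.mapDomain_injective h hpq

theorem algebraicIndepOn_monomial_iff [Nontrivial R] {s : Set (σ →₀ ℕ)} :
    AlgebraicIndepOn R (fun u => monomial u (1 : R)) s ↔ LinearIndepOn ℚ (exponentToRat σ) s := by
  rw [AlgebraicIndepOn, algebraicIndependent_monomial_iff, LinearIndepOn,
    ← linearIndependent_nat_iff_rat]
  exact ((exponentToRat σ).toNatLinearMap.linearIndependent_iff_of_injOn
    exponentToRat_injective.injOn).symm

end MonomialIndependence

section KrullDimension

theorem ringKrullDim_eq_of_isIntegral {A B : Type*} [CommRing A] [CommRing B]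
    [Algebra A B] [FaithfulSMul A B] [Algebra.IsIntegral A B] :
    ringKrullDim B = ringKrullDim A := by
  refine le_antisymm (Order.krullDim_le_of_strictMono (PrimeSpectrum.comap (algebraMap A B))
    fun P Q hPQ => Ideal.IsIntegral.comap_lt_comap hPQ) (iSup_le fun l => ?_)
  obtain ⟨Q, -, hQ, hQl⟩ := Ideal.exists_ideal_over_prime_of_isIntegral (S := B)
    l.head.asIdeal ⊥ (by simp [← RingHom.ker_eq_comap_bot, FaithfulSMul.ker_algebraMap_eq_bot])
  have : Q.LiesOver l.head.asIdeal := ⟨hQl.symm⟩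
  obtain ⟨L, hL, -⟩ := Ideal.exists_ltSeries_of_hasGoingUp l Q
  rw [← hL]
  exact Order.LTSeries.length_le_krullDim L

variable {K A : Type*} [Field K] [CommRing A] [Algebra K A]

theorem ringKrullDim_eq_natCard_of_isTranscendenceBasis [IsDomain A] [Algebra.FiniteType K A]
    {ι : Type*} {x : ι → A} (hx : IsTranscendenceBasis K x) : ringKrullDim A = Nat.card ι := by
  obtain ⟨s, g, hg, hg_int⟩ := exists_integral_inj_algHom_of_fg K A
  algebraize [g.toRingHom]
  have : IsScalarTower K (MvPolynomial (Fin s) K) A := .of_algHom g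
  have : FaithfulSMul (MvPolynomial (Fin s) K) A :=
    (faithfulSMul_iff_algebraMap_injective _ _).mpr hg
  have card_eq := congrArg Cardinal.toNat
    (hx.lift_cardinalMk_eq ((IsTranscendenceBasis.mvPolynomial (Fin s) K).algebraMap_comp (A := A)))
  rw [Cardinal.toNat_lift, Cardinal.toNat_lift] at card_eq
  rw [ringKrullDim_eq_of_isIntegral (A := MvPolynomial (Fin s) K),
    MvPolynomial.ringKrullDim_of_isNoetherianRing, ringKrullDim_eq_zero_of_field, zero_add,
    Nat.card, Nat.card, card_eq]

theorem isTranscendenceBasis_adjoin_image [IsDomain A] {ι : Type*} {x : ι → A} {s t : Set ι}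
    (hst : s ⊆ t) (hs : AlgebraicIndepOn K x s)
    (ht : ∀ i ∈ t, IsAlgebraic (Algebra.adjoin K (x '' s)) (x i)) :
    IsTranscendenceBasis K fun i : s =>
      (⟨x i, Algebra.subset_adjoin ⟨i, hst i.2, rfl⟩⟩ : Algebra.adjoin K (x '' t)) := by
  let B := Algebra.adjoin K (x '' s)
  let C := Algebra.adjoin K (x '' t)
  let y (i : s) : B := ⟨x i, Algebra.subset_adjoin ⟨i, i.2, rfl⟩⟩
  have hBC : B ≤ C := Algebra.adjoin_mono (Set.image_mono hst)
  algebraize [(Subalgebra.inclusion hBC).toRingHom]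
  have isTranscendenceBasis_y : IsTranscendenceBasis K y := by
    have hy : AlgebraicIndependent K y := .of_comp B.val hs
    have range_y : Set.range y = Subtype.val ⁻¹' (x '' s) := by
      ext b
      simp [y, Subtype.ext_iff]
    have adjoin_range_y : Algebra.adjoin K (Set.range y) = ⊤ :=
      range_y ▸ Algebra.adjoin_adjoin_coe_preimage
    rw [hy.isTranscendenceBasis_iff_isAlgebraic, adjoin_range_y]
    exact ⟨fun b => isAlgebraic_algebraMap (⟨b, Algebra.mem_top⟩ : (⊤ : Subalgebra K B))⟩
  have hC : C ≤ (Subalgebra.algebraicClosure B A).restrictScalars K := by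
    rw [Algebra.adjoin_le_iff]
    rintro _ ⟨i, hi, rfl⟩
    exact ht i hi
  have : IsScalarTower B C A := .of_algebraMap_eq fun _ => rfl
  have : IsScalarTower K B C := .of_algebraMap_eq fun _ => rfl
  have : FaithfulSMul B C :=
    (faithfulSMul_iff_algebraMap_injective B C).mpr (Subalgebra.inclusion_injective hBC)
  have : Algebra.IsAlgebraic B C :=
    ⟨fun c => (isAlgebraic_algebraMap_iff Subtype.val_injective).mp (hC c.2)⟩
  exact isTranscendenceBasis_y.algebraMap_comp

theorem ringKrullDim_adjoin_image_monomial {σ : Type*} {V : Set (σ →₀ ℕ)} (hV : V.Finite) :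
    ringKrullDim (Algebra.adjoin K ((fun u => monomial u (1 : K)) '' V)) =
      Module.finrank ℚ (Submodule.span ℚ (exponentToRat σ '' V)) := by
  obtain ⟨s, hsV, -, hVs, hs⟩ := exists_linearIndepOn_extension (K := ℚ)
    (v := exponentToRat σ) (linearIndepOn_empty ..) (Set.empty_subset V)
  have isAlgebraic_of_mem (u) (hu : u ∈ V) : IsAlgebraic
      (Algebra.adjoin K ((fun u => monomial u (1 : K)) '' s)) (monomial u (1 : K)) := by
    by_contra hu_tr
    have h := (algebraicIndepOn_monomial_iff.mpr hs).insert hu_tr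
    rw [algebraicIndepOn_monomial_iff, linearIndepOn_insert_iff] at h
    have hus : u ∈ s := h.2 (hVs ⟨u, hu, rfl⟩)
    exact hu_tr (isAlgebraic_algebraMap (⟨_, Algebra.subset_adjoin ⟨u, hus, rfl⟩⟩ :
      Algebra.adjoin K ((fun u => monomial u (1 : K)) '' s)))
  have : Algebra.FiniteType K (Algebra.adjoin K ((fun u => monomial u (1 : K)) '' V)) :=
    (Subalgebra.fg_iff_finiteType _).mp (Subalgebra.fg_def.mpr ⟨_, hV.image _, rfl⟩)
  rw [ringKrullDim_eq_natCard_of_isTranscendenceBasis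
      (isTranscendenceBasis_adjoin_image hsV (algebraicIndepOn_monomial_iff.mpr hs)
        isAlgebraic_of_mem),
    Submodule.span_eq_of_le _ hVs (Submodule.span_mono (Set.image_mono hsV)),
    Set.image_eq_range, Module.finrank_eq_nat_card_basis (Module.Basis.span hs)]

end KrullDimension

section FiberRing

theorem exists_mem_adjoin_sub_mem_smul {k R A : Type*} [CommRing k] [CommRing R] [CommRing A]
    [Algebra k R] [Algebra R A] [Algebra k A] [IsScalarTower k R A] {m : Ideal R}
    (hm : ∀ r : R, ∃ c : k, r - algebraMap k R c ∈ m) {T : Set A} {b : A}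
    (hb : b ∈ Algebra.adjoin R T) :
    ∃ a ∈ Algebra.adjoin k T, b - a ∈ m • (Algebra.adjoin R T).toSubmodule := by
  have adjoin_le : Algebra.adjoin k T ≤ (Algebra.adjoin R T).restrictScalars k :=
    Algebra.adjoin_le Algebra.subset_adjoin
  have mul_mem_smul {x y : A} (hx : x ∈ m • (Algebra.adjoin R T).toSubmodule)
      (hy : y ∈ Algebra.adjoin R T) : x * y ∈ m • (Algebra.adjoin R T).toSubmodule := by
    induction hx using Submodule.smul_induction_on' with
    | smul r hr z hz => exact smul_mul_assoc r z y ▸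
        Submodule.smul_mem_smul hr ((Algebra.adjoin R T).mul_mem hz hy)
    | add x _ x' _ hx hx' => exact add_mul x x' y ▸ add_mem hx hx'
  induction hb using Algebra.adjoin_induction with
  | mem x hx => exact ⟨x, Algebra.subset_adjoin hx, by simp⟩
  | algebraMap r =>
    obtain ⟨c, hc⟩ := hm r
    refine ⟨algebraMap k A c, algebraMap_mem _ c, ?_⟩
    rw [IsScalarTower.algebraMap_apply k R A, ← map_sub, Algebra.algebraMap_eq_smul_one]
    exact Submodule.smul_mem_smul hc (one_mem (Algebra.adjoin R T))
  | add x y _ _ ihx ihy =>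
    obtain ⟨a, ha, hxa⟩ := ihx
    obtain ⟨b, hb, hyb⟩ := ihy
    exact ⟨a + b, add_mem ha hb, add_sub_add_comm x y a b ▸ add_mem hxa hyb⟩
  | mul x y _ hy ihx ihy =>
    obtain ⟨a, ha, hxa⟩ := ihx
    obtain ⟨b, hb, hyb⟩ := ihy
    refine ⟨a * b, mul_mem ha hb, ?_⟩
    rw [show x * y - a * b = (x - a) * y + (y - b) * a by ring]
    exact add_mem (mul_mem_smul hxa hy) (mul_mem_smul hyb (adjoin_le ha))

theorem mem_map_algebraMap_subalgebra_iff {R A : Type*} [CommRing R] [CommRing A] [Algebra R A]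
    {B : Subalgebra R A} {m : Ideal R} {x : B} :
    x ∈ m.map (algebraMap R B) ↔ (x : A) ∈ m • B.toSubmodule := by
  have map_eq : (m • (⊤ : Submodule R B)).map B.val.toLinearMap = m • B.toSubmodule := by
    rw [Submodule.map_smul'', Submodule.map_top]
    exact congrArg (m • ·) (Submodule.range_subtype B.toSubmodule)
  rw [← map_eq, Ideal.smul_top_eq_map]
  exact (Function.Injective.mem_set_image (f := B.val) Subtype.val_injective).symm

theorem nonempty_ringEquiv_adjoin_quotient_map {k R A : Type*} [CommRing k] [CommRing R]
    [CommRing A] [Algebra k R] [Algebra R A] [Algebra k A] [IsScalarTower k R A] {m : Ideal R}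
    (hm : ∀ r : R, ∃ c : k, r - algebraMap k R c ∈ m) {T : Set A}
    (hT : ∀ a ∈ Algebra.adjoin k T, a ∈ m • (Algebra.adjoin R T).toSubmodule → a = 0) :
    Nonempty (Algebra.adjoin k T ≃+*
      Algebra.adjoin R T ⧸ m.map (algebraMap R (Algebra.adjoin R T))) := by
  have adjoin_le : Algebra.adjoin k T ≤ (Algebra.adjoin R T).restrictScalars k :=
    Algebra.adjoin_le Algebra.subset_adjoin
  let ι : Algebra.adjoin k T →+* Algebra.adjoin R T :=
    (Algebra.adjoin k T).val.toRingHom.codRestrict (Algebra.adjoin R T) fun a => adjoin_le a.2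
  let φ := (Ideal.Quotient.mk (m.map (algebraMap R (Algebra.adjoin R T)))).comp ι
  have φ_injective : Function.Injective φ := by
    rw [injective_iff_map_eq_zero]
    intro a ha
    have ha_mem : ι a ∈ m.map (algebraMap R (Algebra.adjoin R T)) :=
      Ideal.Quotient.eq_zero_iff_mem.mp ha
    exact Subtype.ext (hT a a.2 (mem_map_algebraMap_subalgebra_iff.mp ha_mem))
  have φ_surjective : Function.Surjective φ := by
    intro y
    obtain ⟨b, rfl⟩ := Ideal.Quotient.mk_surjective y
    obtain ⟨a, ha, hba⟩ := exists_mem_adjoin_sub_mem_smul hm b.2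
    have sub_mem : b - ι ⟨a, ha⟩ ∈ m.map (algebraMap R (Algebra.adjoin R T)) :=
      mem_map_algebraMap_subalgebra_iff.mpr hba
    exact ⟨⟨a, ha⟩, (Ideal.Quotient.eq.mpr sub_mem).symm⟩
  exact ⟨RingEquiv.ofBijective φ ⟨φ_injective, φ_surjective⟩⟩

section Rees

variable {R : Type*} [CommRing R]

theorem reesAlgebra_span_eq_adjoin (S : Set R) :
    reesAlgebra (Ideal.span S) = Algebra.adjoin R (Polynomial.monomial 1 '' S) := by
  rw [← adjoin_monomial_eq_reesAlgebra, Ideal.span, Submodule.map_span, Algebra.adjoin_span]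

theorem coeff_mem_mul_pow_of_mem_smul_reesAlgebra {I m : Ideal R} {f : Polynomial R}
    (hf : f ∈ m • (reesAlgebra I).toSubmodule) (j : ℕ) : f.coeff j ∈ m * I ^ j := by
  induction hf using Submodule.smul_induction_on' with
  | smul r hr g hg =>
    rw [Polynomial.coeff_smul]
    exact Ideal.mul_mem_mul hr (hg j)
  | add f _ g _ hf hg => exact Polynomial.coeff_add f g j ▸ add_mem hf hg

end Rees

variable {σ R : Type*} [CommRing R] {d : ℕ} {S : Set (MvPolynomial σ R)}

theorem eq_zero_of_isHomogeneous_of_mem_idealOfVars_pow {p : MvPolynomial σ R}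
    (hp : p.IsHomogeneous d) (hmem : p ∈ idealOfVars σ R ^ (d + 1)) : p = 0 := by
  by_contra hp0
  obtain ⟨u, hu⟩ := support_nonempty.mpr hp0
  have degree_eq : u.degree = d := by
    rw [Finsupp.degree_eq_weight_one]
    exact hp (mem_support_iff.mp hu)
  exact absurd ((mem_pow_idealOfVars_iff _ _).mp hmem u hu) (by omega)

theorem mem_idealOfVars_pow_of_isHomogeneous {p : MvPolynomial σ R} (hp : p.IsHomogeneous d) :
    p ∈ idealOfVars σ R ^ d := by
  rw [mem_pow_idealOfVars_iff]
  intro u hu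
  rw [Finsupp.degree_eq_weight_one]
  exact (hp (mem_support_iff.mp hu)).ge

theorem exists_sub_algebraMap_mem_idealOfVars (p : MvPolynomial σ R) :
    ∃ c : R, p - algebraMap R (MvPolynomial σ R) c ∈ idealOfVars σ R := by
  refine ⟨constantCoeff p, ?_⟩
  rw [← pow_one (idealOfVars σ R), mem_pow_idealOfVars_iff]
  intro u hu
  rw [Nat.one_le_iff_ne_zero, Ne, Finsupp.degree_eq_zero_iff]
  rintro rfl
  exact mem_support_iff.mp hu (by simp [constantCoeff_eq])

/-- The algebra of polynomials in `t` over `R[x_i : i ∈ σ]` whose coefficient of `t ^ j` is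
homogeneous of degree `d * j`. -/
def diagonalSubalgebra (σ R : Type*) [CommRing R] (d : ℕ) :
    Subalgebra R (Polynomial (MvPolynomial σ R)) where
  carrier := {f | ∀ j, (f.coeff j).IsHomogeneous (d * j)}
  mul_mem' {f g} hf hg j := by
    rw [Polynomial.coeff_mul]
    refine IsHomogeneous.sum _ _ _ fun x hx => ?_
    rw [← Finset.HasAntidiagonal.mem_antidiagonal.mp hx, mul_add]
    exact (hf _).mul (hg _)
  add_mem' {f g} hf hg j := Polynomial.coeff_add f g j ▸ (hf j).add (hg j)
  algebraMap_mem' c j := by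
    rw [Polynomial.algebraMap_apply, Polynomial.coeff_C]
    split_ifs with hj
    · exact hj ▸ isHomogeneous_C _ _
    · exact isHomogeneous_zero _ _ _

theorem adjoin_monomial_image_le_diagonalSubalgebra (hS : ∀ p ∈ S, p.IsHomogeneous d) :
    Algebra.adjoin R (Polynomial.monomial 1 '' S) ≤ diagonalSubalgebra σ R d := by
  rw [Algebra.adjoin_le_iff]
  rintro _ ⟨p, hp, rfl⟩ j
  rw [Polynomial.coeff_monomial]
  split_ifs with hj
  · subst hj
    exact (mul_one d).symm ▸ hS p hp
  · exact isHomogeneous_zero _ _ _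

theorem coeff_eq_homogeneousComponent_eval_one (hd : d ≠ 0)
    {f : Polynomial (MvPolynomial σ R)} (hf : f ∈ diagonalSubalgebra σ R d) (j : ℕ) :
    f.coeff j = homogeneousComponent (d * j) (f.eval 1) := by
  have component_coeff (i : ℕ) : homogeneousComponent (d * j) (f.coeff i) =
      if i = j then f.coeff j else 0 := by
    rw [homogeneousComponent_of_mem (hf i)]
    rcases eq_or_ne i j with rfl | hij
    · rw [if_pos rfl, if_pos rfl]
    · rw [if_neg hij, if_neg fun h => hij (Nat.eq_of_mul_eq_mul_left (by omega) h).symm]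
  simp only [Polynomial.eval_eq_sum, Polynomial.sum, one_pow, mul_one, map_sum, component_coeff,
    Finset.sum_ite_eq']
  split_ifs with hj
  · rfl
  · exact Polynomial.notMem_support_iff.mp hj

theorem ringKrullDim_adjoin_monomial_image (hd : d ≠ 0) (hS : ∀ p ∈ S, p.IsHomogeneous d) :
    ringKrullDim (Algebra.adjoin R (Polynomial.monomial 1 '' S)) =
      ringKrullDim (Algebra.adjoin R S) := by
  let evalOne : Polynomial (MvPolynomial σ R) →ₐ[R] MvPolynomial σ R :=
    (Polynomial.aeval (R := MvPolynomial σ R) 1).restrictScalars R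
  have evalOne_apply (f) : evalOne f = f.eval 1 := congrFun (Polynomial.coe_aeval_eq_eval 1) f
  let φ := evalOne.comp (Algebra.adjoin R (Polynomial.monomial 1 '' S)).val
  have φ_injective : Function.Injective φ := by
    intro f g hfg
    have eval_eq : f.1.eval 1 = g.1.eval 1 := by simpa only [evalOne_apply] using! hfg
    ext j : 2
    rw [coeff_eq_homogeneousComponent_eval_one hd
        (adjoin_monomial_image_le_diagonalSubalgebra hS f.2),
      coeff_eq_homogeneousComponent_eval_one hd
        (adjoin_monomial_image_le_diagonalSubalgebra hS g.2), eval_eq]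
  have range_φ : φ.range = Algebra.adjoin R S := by
    rw [AlgHom.range_comp, Subalgebra.range_val, AlgHom.map_adjoin, Set.image_image]
    simp [evalOne_apply]
  rw [← range_φ]
  exact ringKrullDim_eq_of_ringEquiv (AlgEquiv.ofInjective φ φ_injective).toRingEquiv

theorem eq_zero_of_mem_adjoin_of_mem_smul_reesAlgebra (hS : ∀ p ∈ S, p.IsHomogeneous d)
    {f : Polynomial (MvPolynomial σ R)}
    (hf : f ∈ Algebra.adjoin R (Polynomial.monomial 1 '' S))
    (hmem : f ∈ idealOfVars σ R • (reesAlgebra (Ideal.span S)).toSubmodule) : f = 0 := by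
  have span_le : Ideal.span S ≤ idealOfVars σ R ^ d :=
    Ideal.span_le.mpr fun p hp => mem_idealOfVars_pow_of_isHomogeneous (hS p hp)
  ext1 j
  refine eq_zero_of_isHomogeneous_of_mem_idealOfVars_pow
    (adjoin_monomial_image_le_diagonalSubalgebra hS hf j) ?_
  rw [pow_succ', pow_mul]
  exact Ideal.mul_mono_right (Ideal.pow_right_mono span_le j)
    (coeff_mem_mul_pow_of_mem_smul_reesAlgebra hmem j)

theorem ringKrullDim_reesAlgebra_quotient (hS : ∀ p ∈ S, p.IsHomogeneous d) :
    ringKrullDim (reesAlgebra (Ideal.span S) ⧸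
        (idealOfVars σ R).map (algebraMap _ (reesAlgebra (Ideal.span S)))) =
      ringKrullDim (Algebra.adjoin R (Polynomial.monomial 1 '' S)) := by
  have eq_zero (f) := eq_zero_of_mem_adjoin_of_mem_smul_reesAlgebra (f := f) hS
  rw [reesAlgebra_span_eq_adjoin] at eq_zero ⊢
  obtain ⟨e⟩ := nonempty_ringEquiv_adjoin_quotient_map
    exists_sub_algebraMap_mem_idealOfVars eq_zero
  exact (ringKrullDim_eq_of_ringEquiv e).symm

theorem analyticSpread_span {K : Type} [Field K] {n d : ℕ} (hd : d ≠ 0)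
    {S : Set (MvPoly K (Fin n))} (hS : ∀ p ∈ S, p.IsHomogeneous d) :
    analyticSpread K (Ideal.span S) = ringKrullDim (Algebra.adjoin K S) :=
  (ringKrullDim_reesAlgebra_quotient hS).trans (ringKrullDim_adjoin_monomial_image hd hS)

end FiberRing

section ConnectedComponents

variable {V : Type*} {G : SimpleGraph V}

theorem nontrivial_supp_connectedComponentMk_iff {v : V} :
    (G.connectedComponentMk v).supp.Nontrivial ↔ ∃ w, G.Adj v w := by
  constructor
  · intro h
    obtain ⟨w, hw, hwv⟩ := h.exists_ne v
    exact SimpleGraph.mem_support_of_reachable hwv.symm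
      (SimpleGraph.ConnectedComponent.exact hw).symm
  · rintro ⟨w, hvw⟩
    exact ⟨v, rfl, w, (SimpleGraph.ConnectedComponent.sound hvw.reachable).symm, hvw.ne⟩

theorem natCard_not_nontrivial_connectedComponent :
    Nat.card {c : G.ConnectedComponent // ¬ c.supp.Nontrivial} =
      Nat.card {v : V // ∀ w, ¬ G.Adj v w} := by
  symm
  refine Nat.card_congr (Equiv.ofBijective (fun v => ⟨G.connectedComponentMk v, ?_⟩) ⟨?_, ?_⟩)
  · rw [nontrivial_supp_connectedComponentMk_iff]
    exact not_exists.mpr v.2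
  · intro v w hvw
    have mk_eq : G.connectedComponentMk v = G.connectedComponentMk w := congrArg Subtype.val hvw
    have not_nontrivial : ¬ (G.connectedComponentMk w).supp.Nontrivial := by
      rw [nontrivial_supp_connectedComponentMk_iff]
      exact not_exists.mpr w.2
    exact Subtype.ext (Set.not_nontrivial_iff.mp not_nontrivial mk_eq rfl)
  · rintro ⟨c, hc⟩
    induction c using SimpleGraph.ConnectedComponent.ind with
    | h v =>
      rw [nontrivial_supp_connectedComponentMk_iff, not_exists] at hc
      exact ⟨⟨v, hc⟩, rfl⟩

theorem natCard_bipartite_connectedComponent [Finite V] :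
    Nat.card {c : G.ConnectedComponent // (G.induce c.supp).Colorable 2} =
      Nat.card {v : V // ∀ w, ¬ G.Adj v w} +
        Nat.card {c : G.ConnectedComponent //
          c.supp.Nontrivial ∧ (G.induce c.supp).Colorable 2} := by
  classical
  have colorable_of_not_nontrivial {c : G.ConnectedComponent} (hc : ¬ c.supp.Nontrivial) :
      (G.induce c.supp).Colorable 2 := by
    have := (Set.not_nontrivial_iff.mp hc).coe_sort
    exact ⟨.mk (fun _ => 0) fun h => absurd (Subsingleton.elim _ _) h.ne⟩
  have colorable_iff (c : G.ConnectedComponent) : (G.induce c.supp).Colorable 2 ↔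
      ¬ c.supp.Nontrivial ∨ c.supp.Nontrivial ∧ (G.induce c.supp).Colorable 2 := by
    have := colorable_of_not_nontrivial (c := c)
    tauto
  rw [← natCard_not_nontrivial_connectedComponent, ← Nat.card_sum]
  refine Nat.card_congr ((Equiv.subtypeEquivRight colorable_iff).trans (subtypeOrEquiv _ _ ?_))
  exact Pi.disjoint_iff.mpr fun c => Prop.disjoint_iff.mpr fun h => h.1 h.2.1

end ConnectedComponents

section EdgeRank

variable (F : Type*) [Field F] {V : Type*} (G : SimpleGraph V)

/-- The functions on the vertices that change sign along every edge: the orthogonal complement of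
the edge vectors. -/
def alternating : Submodule F (V → F) where
  carrier := {f | ∀ a b, G.Adj a b → f a + f b = 0}
  add_mem' {f g} hf hg a b hab := by
    rw [Pi.add_apply, Pi.add_apply, add_add_add_comm, hf a b hab, hg a b hab, add_zero]
  zero_mem' _ _ _ := add_zero 0
  smul_mem' c f hf a b hab := by
    rw [Pi.smul_apply, Pi.smul_apply, ← smul_add, hf a b hab, smul_zero]

theorem map_llift_alternating :
    (alternating F G).map (Finsupp.llift F F F V).toLinearMap =
      (Submodule.span F (edgeVectors F G)).dualAnnihilator := by
  ext φ
  obtain ⟨f, rfl⟩ := (Finsupp.llift F F F V).surjective φ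
  have llift_edgeVector (a b : V) : Finsupp.llift F F F V f
      (Finsupp.single a 1 + Finsupp.single b 1) = f a + f b := by
    rw [map_add, Finsupp.llift_apply]
    simp
  have mem_annihilator_iff : Finsupp.llift F F F V f ∈
      (Submodule.span F (edgeVectors F G)).dualAnnihilator ↔ f ∈ alternating F G := by
    rw [← SetLike.mem_coe, Submodule.coe_dualAnnihilator_span]
    constructor
    · intro h a b hab
      exact (llift_edgeVector a b).symm.trans (h ⟨a, b, hab, rfl⟩)
    · rintro h _ ⟨a, b, hab, rfl⟩
      exact (llift_edgeVector a b).trans (h a b hab)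
  rw [mem_annihilator_iff]
  exact (Finsupp.llift F F F V).injective.mem_set_image

theorem finrank_span_edgeVectors_add_finrank_alternating [Finite V] :
    Module.finrank F (Submodule.span F (edgeVectors F G)) +
      Module.finrank F (alternating F G) = Nat.card V := by
  have := Fintype.ofFinite V
  rw [← LinearEquiv.finrank_map_eq (Finsupp.llift F F F V) (alternating F G),
    map_llift_alternating, Subspace.finrank_add_finrank_dualAnnihilator_eq,
    Module.finrank_finsupp_self, Nat.card_eq_fintype_card]

variable {F G}

theorem apply_eq_or_eq_neg_of_reachable {f : V → F} (hf : f ∈ alternating F G) {v w : V}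
    (hvw : G.Reachable v w) : f w = f v ∨ f w = -f v := by
  rw [SimpleGraph.reachable_iff_reflTransGen] at hvw
  induction hvw with
  | refl => exact .inl rfl
  | tail _ hab ih =>
    rw [eq_neg_of_add_eq_zero_right (hf _ _ hab), neg_inj, neg_eq_iff_eq_neg]
    exact ih.symm

theorem colorable_two_of_mem_alternating [NeZero (2 : F)] {f : V → F}
    (hf : f ∈ alternating F G) {v : V} (hv : f v ≠ 0) :
    (G.induce (G.connectedComponentMk v).supp).Colorable 2 := by
  have neg_ne : -f v ≠ f v := by
    rw [Ne, neg_eq_iff_add_eq_zero, ← two_mul]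
    exact mul_ne_zero two_ne_zero hv
  let col : (G.induce (G.connectedComponentMk v).supp).Coloring Prop := by
    refine .mk (fun a => f a = f v) fun {a b} hab hcol => ?_
    have f_b : f b = -f a := eq_neg_of_add_eq_zero_right (hf a b hab)
    rcases apply_eq_or_eq_neg_of_reachable hf (SimpleGraph.ConnectedComponent.exact a.2).symm
      with f_a | f_a
    · exact neg_ne (calc
        -f v = f b := by rw [f_b, f_a]
        _ = f v := hcol.mp f_a)
    · exact neg_ne (f_a.symm.trans (hcol.mpr (by rw [f_b, f_a, neg_neg])))
  simpa using col.colorable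

theorem exists_mem_alternating_support_eq {c : G.ConnectedComponent}
    (hc : (G.induce c.supp).Colorable 2) : ∃ f ∈ alternating F G, f.support = c.supp := by
  classical
  obtain ⟨col⟩ := hc
  refine ⟨fun v => if hv : v ∈ c.supp then (-1) ^ (col ⟨v, hv⟩ : ℕ) else 0, fun a b hab => ?_, ?_⟩
  · have hab_supp := c.mem_supp_congr_adj hab
    by_cases ha : a ∈ c.supp
    · have hb := hab_supp.mp ha
      have hcol : col ⟨a, ha⟩ ≠ col ⟨b, hb⟩ := col.valid hab
      simp only [dif_pos ha, dif_pos hb]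
      generalize col ⟨a, ha⟩ = x at hcol ⊢
      generalize col ⟨b, hb⟩ = y at hcol ⊢
      fin_cases x <;> fin_cases y <;> simp at hcol ⊢
    · simp only [dif_neg ha, dif_neg (hab_supp.not.mp ha), add_zero]
  · ext v
    by_cases hv : v ∈ c.supp <;>
      simp only [Function.mem_support, hv, dite_true, dite_false, ne_eq, not_true, not_false_iff,
        pow_eq_zero_iff', neg_eq_zero, one_ne_zero, false_and]

theorem finrank_alternating [NeZero (2 : F)] [Finite V] : Module.finrank F (alternating F G) =
    Nat.card {c : G.ConnectedComponent // (G.induce c.supp).Colorable 2} := by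
  classical
  let B := {c : G.ConnectedComponent // (G.induce c.supp).Colorable 2}
  have := Fintype.ofFinite B
  let ev : alternating F G →ₗ[F] B → F :=
    (LinearMap.funLeft F F fun c : B => c.1.out).comp (alternating F G).subtype
  have ev_injective : Function.Injective ev := by
    rw [injective_iff_map_eq_zero]
    intro f hf
    ext v
    by_contra hv
    have hout : f.1 (G.connectedComponentMk v).out = 0 :=
      congrFun hf ⟨_, colorable_two_of_mem_alternating f.2 hv⟩
    have := apply_eq_or_eq_neg_of_reachable f.2
      (SimpleGraph.ConnectedComponent.exact (Quot.out_eq (G.connectedComponentMk v)))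
    rw [hout, neg_zero, or_self] at this
    exact hv this
  have ev_surjective : Function.Surjective ev := by
    rw [← LinearMap.range_eq_top, eq_top_iff, ← (Pi.basisFun F B).span_eq, Submodule.span_le]
    rintro _ ⟨c, rfl⟩
    obtain ⟨f, hf, hfc⟩ := exists_mem_alternating_support_eq (F := F) c.2
    have apply_out_ne_zero_iff (c' : B) : f c'.1.out ≠ 0 ↔ c' = c := by
      rw [← Function.mem_support, hfc, SimpleGraph.ConnectedComponent.mem_supp_iff,
        Subtype.ext_iff]
      exact (Quot.out_eq c'.1).congr_left
    refine ⟨(f c.1.out)⁻¹ • ⟨f, hf⟩, funext fun c' => ?_⟩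
    change (f c.1.out)⁻¹ * f c'.1.out = Pi.basisFun F B c c'
    rw [Pi.basisFun_apply]
    rcases eq_or_ne c' c with rfl | hc'
    · rw [Pi.single_eq_same, inv_mul_cancel₀ ((apply_out_ne_zero_iff c').mpr rfl)]
    · rw [Pi.single_eq_of_ne hc', not_ne_iff.mp ((apply_out_ne_zero_iff c').not.mpr hc'), mul_zero]
  rw [(LinearEquiv.ofBijective ev ⟨ev_injective, ev_surjective⟩).finrank_eq,
    Module.finrank_fintype_fun_eq_card, Nat.card_eq_fintype_card]

theorem finrank_span_edgeVectors_add_natCard [NeZero (2 : F)] [Finite V] :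
    Module.finrank F (Submodule.span F (edgeVectors F G)) +
      (Nat.card {v : V // ∀ w, ¬ G.Adj v w} +
        Nat.card {c : G.ConnectedComponent //
          c.supp.Nontrivial ∧ (G.induce c.supp).Colorable 2}) = Nat.card V := by
  rw [← natCard_bipartite_connectedComponent, ← finrank_alternating (F := F),
    finrank_span_edgeVectors_add_finrank_alternating]

end EdgeRank

section AnalyticSpread

theorem finite_edgeVectors (A : Type*) [AddMonoidWithOne A] {V : Type*} [Finite V]
    (G : SimpleGraph V) : (edgeVectors A G).Finite := by
  refine (Set.finite_range fun p : V × V =>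
    (Finsupp.single p.1 1 + Finsupp.single p.2 1 : V →₀ A)).subset ?_
  rintro _ ⟨a, b, -, rfl⟩
  exact ⟨(a, b), rfl⟩

theorem exponentToRat_image_edgeVectors {V : Type*} (G : SimpleGraph V) :
    exponentToRat V '' edgeVectors ℕ G = edgeVectors ℚ G := by
  ext u
  simp only [edgeVectors, Set.mem_image, Set.mem_ofPred_eq]
  constructor
  · rintro ⟨_, ⟨a, b, hab, rfl⟩, rfl⟩
    exact ⟨a, b, hab, by simp [exponentToRat_single]⟩
  · rintro ⟨a, b, hab, rfl⟩
    exact ⟨_, ⟨a, b, hab, rfl⟩, by simp [exponentToRat_single]⟩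

variable (K : Type) [Field K] {n : ℕ} (G : SimpleGraph (Fin n))

theorem analyticSpread_edgeIdealG : analyticSpread K (edgeIdealG K G) =
    Module.finrank ℚ (Submodule.span ℚ (edgeVectors ℚ G)) := by
  have isHomogeneous_of_mem : ∀ p ∈ (fun u => monomial u (1 : K)) '' edgeVectors ℕ G,
      p.IsHomogeneous 2 := by
    rintro _ ⟨_, ⟨a, b, -, rfl⟩, rfl⟩
    exact isHomogeneous_monomial _ (by simp)
  rw [edgeIdealG_eq_span_monomial, analyticSpread_span two_ne_zero isHomogeneous_of_mem,
    ringKrullDim_adjoin_image_monomial (finite_edgeVectors ℕ G), exponentToRat_image_edgeVectors]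

theorem analyticSpread_edgeIdealG_add_natCard :
    analyticSpread K (edgeIdealG K G) +
        (((Nat.card {i : Fin n // ∀ j, ¬ G.Adj i j} +
          Nat.card {c : G.ConnectedComponent //
            c.supp.Nontrivial ∧ (G.induce c.supp).Colorable 2} : ℕ) : ℕ∞) : WithBot ℕ∞) =
      ringKrullDim (MvPoly K (Fin n)) := by
  rw [analyticSpread_edgeIdealG, MvPolynomial.ringKrullDim_of_isNoetherianRing,
    ringKrullDim_eq_zero_of_field, zero_add,
    ← finrank_span_edgeVectors_add_natCard (F := ℚ) (G := G)]
  push_cast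
  rfl

end AnalyticSpread

/-- (a) the depth inequality for colon ideals of powers of an edge
ideal of a graph; (c) `dim R - ℓ(I(G)) = |isol(G)| + c_0(G)`, written additively. -/
theorem stmt15 (K : Type) [Field K] (n : ℕ) (G : SimpleGraph (Fin n)) :
    (∀ k : ℕ, 1 ≤ k → ∀ i : Fin n,
      depthQ K (Fin n)
          ((edgeIdealG K G ^ k).colon (Ideal.span {(MvPolynomial.X i : MvPoly K (Fin n)) ^ k})) ≤
        depthQ K (Fin n) (edgeIdealDel K G (G.neighborSet i) ^ k + nbIdeal K G i)) ∧
    (analyticSpread K (edgeIdealG K G) +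
        (((Nat.card {i : Fin n // ∀ j, ¬ G.Adj i j} +
          Nat.card {c : G.ConnectedComponent //
            c.supp.Nontrivial ∧ (G.induce c.supp).Colorable 2} : ℕ) : ℕ∞) : WithBot ℕ∞) =
      ringKrullDim (MvPoly K (Fin n))) := by
  exact ⟨fun k _ i => depthQ_colon_le le_rfl i, analyticSpread_edgeIdealG_add_natCard K G⟩
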